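/- For every instance of interval selection with unit weights, every prediction assignment, and every maximum-cardinality feasible set OPT, the solution produced by algorithm Naive satisfies ALG ≥ OPT − η, where η is the total prediction error relative to OPT. -/

import Mathlib

attribute [local instance] Classical.propDecidable

noncomputable section

/-- An interval `I = (s, f)` with `s < f`, occupying `[s, f)`. -/
structure Ivl where
  s : ℝ
  f : ℝ
  lt : s < f

namespace Ivl

/-- The set of points occupied by an interval: the half-open set `[s, f)`. -/
def occ (I : Ivl) : Set ℝ := Set.Ico I.s I.f

/-- The length of an interval, `f - s` (also its proportional weight). -/
def len (I : Ivl) : ℝ := I.f - I.s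

end Ivl

/-- Two intervals conflict if their occupied sets intersect. -/
def Conflict (I J : Ivl) : Prop := (I.occ ∩ J.occ).Nonempty

/-- A set of intervals is feasible if its elements are pairwise disjoint. -/
def Feasible (S : Finset Ivl) : Prop :=
  ∀ I ∈ S, ∀ J ∈ S, I ≠ J → ¬ Conflict I J

/-- `opt` is a maximum-cardinality feasible subset of the instance's intervals. -/
def IsMaxCardOpt (inst : List Ivl) (opt : Finset Ivl) : Prop :=
  (∀ I ∈ opt, I ∈ inst) ∧ Feasible opt ∧
    ∀ T : Finset Ivl, (∀ I ∈ T, I ∈ inst) → Feasible T → T.card ≤ opt.card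

/-- The prediction error introduced by interval `I`, relative to `opt`,
with weight function `w`. -/
def err (w : Ivl → ℝ) (opt : Finset Ivl) (Prd : Ivl → Bool) (I : Ivl) : ℝ :=
  if (Prd I = true ↔ I ∈ opt) then 0
  else if I ∈ opt then w I
  else (∑ J ∈ opt.filter (fun J => Conflict J I), w J) - w I

/-- The total prediction error of the instance relative to `opt`. -/
def totalErr (w : Ivl → ℝ) (opt : Finset Ivl) (Prd : Ivl → Bool)
    (inst : List Ivl) : ℝ :=
  (inst.map (err w opt Prd)).sum

/-- One step of algorithm `Naive`: accept `I` iff it is predicted optimal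
and conflicts with nothing in the current solution. -/
def naiveStep (Prd : Ivl → Bool) (S : Finset Ivl) (I : Ivl) : Finset Ivl :=
  if Prd I = true ∧ ∀ J ∈ S, ¬ Conflict I J then insert I S else S

/-- Algorithm `Naive` run on the whole instance, in order. -/
def naive (Prd : Ivl → Bool) (inst : List Ivl) : Finset Ivl :=
  inst.foldl (naiveStep Prd) ∅

/-!
Exchange the optimal intervals missed by `naive` for the ones it wrongly accepts. An interval of
`opt` that `naive` leaves out is either predicted `0`, which costs its weight in error, or blocked
by an accepted interval `I ∉ opt`, whose error plus its own weight pays for everything in `opt`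
conflicting with `I`. The remaining errors are nonnegative, since `opt` cannot be improved by
exchanging the intervals conflicting with some `I` for `I` itself.
-/

section BigOperators

variable {α β M : Type*} [AddCommMonoid M] [PartialOrder M] [IsOrderedAddMonoid M]

theorem sum_le_list_sum_map_of_nonneg {s : Finset α} {l : List α} {f : α → M}
    (hsl : ∀ a ∈ s, a ∈ l) (hf : ∀ a ∈ l, 0 ≤ f a) : ∑ a ∈ s, f a ≤ (l.map f).sum := by
  rw [Finset.sum_list_map_count]
  calc ∑ a ∈ s, f a
      ≤ ∑ a ∈ l.toFinset, f a :=
        Finset.sum_le_sum_of_subset_of_nonneg (fun a ha => List.mem_toFinset.2 (hsl a ha))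
          fun a ha _ => hf a (List.mem_toFinset.1 ha)
    _ ≤ ∑ a ∈ l.toFinset, l.count a • f a := Finset.sum_le_sum fun a ha => by
        have hal : a ∈ l := List.mem_toFinset.1 ha
        exact le_self_nsmul (hf a hal) (List.count_pos_iff.2 hal).ne'

theorem sum_le_sum_sum_filter_of_forall_exists {s : Finset α} {t : Finset β} {r : α → β → Prop}
    {f : α → M} (hf : ∀ a ∈ s, 0 ≤ f a) (hr : ∀ a ∈ s, ∃ b ∈ t, r a b) :
    ∑ a ∈ s, f a ≤ ∑ b ∈ t, ∑ a ∈ s with r a b, f a :=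
  calc ∑ a ∈ s, f a
      ≤ ∑ a ∈ s, ∑ b ∈ t with r a b, f a := Finset.sum_le_sum fun a ha => by
        obtain ⟨b, hb, hab⟩ := hr a ha
        exact Finset.single_le_sum (f := fun _ => f a) (fun _ _ => hf a ha)
          (Finset.mem_filter.2 ⟨hb, hab⟩)
    _ = ∑ b ∈ t, ∑ a ∈ s with r a b, f a :=
        Finset.sum_comm' fun a b => by simp only [Finset.mem_filter]; tauto

end BigOperators

theorem Conflict.symm {I J : Ivl} (h : Conflict I J) : Conflict J I := by
  rwa [Conflict, Set.inter_comm]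

theorem Feasible.subset {S T : Finset Ivl} (hT : Feasible T) (hST : S ⊆ T) : Feasible S :=
  fun I hI J hJ => hT I (hST hI) J (hST hJ)

theorem Feasible.insert {S : Finset Ivl} {I : Ivl} (hS : Feasible S)
    (hI : ∀ J ∈ S, ¬ Conflict J I) : Feasible (insert I S) := by
  intro K hK L hL hKL
  rcases Finset.mem_insert.1 hK with rfl | hKS <;> rcases Finset.mem_insert.1 hL with rfl | hLS
  · exact absurd rfl hKL
  · exact fun h => hI L hLS h.symm
  · exact hI K hKS
  · exact hS K hKS L hLS hKL

/-- `opt` is a feasible subset of the instance of maximum total weight with respect to `w`; for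
`w = 1` this is `IsMaxCardOpt`. -/
structure IsMaxWeightOpt (w : Ivl → ℝ) (inst : List Ivl) (opt : Finset Ivl) : Prop where
  mem_inst : ∀ I ∈ opt, I ∈ inst
  feasible : Feasible opt
  sum_le : ∀ T : Finset Ivl, (∀ I ∈ T, I ∈ inst) → Feasible T → ∑ I ∈ T, w I ≤ ∑ I ∈ opt, w I

/-- `opt` is a feasible subset of the instance which does not gain weight by dropping an interval,
nor by adding one of the instance in exchange for those conflicting with it: the local form of
optimality under which every prediction error is nonnegative. For `w = 1` it says that `opt` is
maximal under inclusion. -/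
structure IsExchangeOpt (w : Ivl → ℝ) (inst : List Ivl) (opt : Finset Ivl) : Prop where
  mem_inst : ∀ I ∈ opt, I ∈ inst
  feasible : Feasible opt
  weight_nonneg : ∀ I ∈ opt, 0 ≤ w I
  weight_le_conflicts : ∀ I ∈ inst, I ∉ opt → w I ≤ ∑ J ∈ opt with Conflict J I, w J

theorem IsMaxCardOpt.isMaxWeightOpt {inst : List Ivl} {opt : Finset Ivl}
    (hopt : IsMaxCardOpt inst opt) : IsMaxWeightOpt (fun _ => 1) inst opt where
  mem_inst := hopt.1
  feasible := hopt.2.1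
  sum_le T hT hfeas := by simpa using hopt.2.2 T hT hfeas

namespace IsMaxWeightOpt

variable {w : Ivl → ℝ} {inst : List Ivl} {opt : Finset Ivl} {I : Ivl}

theorem weight_nonneg (hopt : IsMaxWeightOpt w inst opt) (hI : I ∈ opt) : 0 ≤ w I := by
  have herase : opt.erase I ⊆ opt := Finset.erase_subset I opt
  have hle := hopt.sum_le (opt.erase I) (fun J hJ => hopt.mem_inst J (herase hJ))
    (hopt.feasible.subset herase)
  have hsum := Finset.add_sum_erase opt w hI
  linarith

theorem weight_le_conflicts (hopt : IsMaxWeightOpt w inst opt) (hI : I ∈ inst) (hIopt : I ∉ opt) :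
    w I ≤ ∑ J ∈ opt with Conflict J I, w J := by
  set rest := opt.filter fun J => ¬ Conflict J I
  have hrest : rest ⊆ opt := Finset.filter_subset _ opt
  have hfeas : Feasible (insert I rest) :=
    (hopt.feasible.subset hrest).insert fun J hJ => (Finset.mem_filter.1 hJ).2
  have hle := hopt.sum_le (insert I rest)
    (Finset.forall_mem_insert .. |>.2 ⟨hI, fun J hJ => hopt.mem_inst J (hrest hJ)⟩) hfeas
  rw [Finset.sum_insert fun h => hIopt (hrest h)] at hle
  have hsplit := Finset.sum_filter_add_sum_filter_not opt (fun J => Conflict J I) w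
  linarith

theorem isExchangeOpt (hopt : IsMaxWeightOpt w inst opt) : IsExchangeOpt w inst opt where
  mem_inst := hopt.mem_inst
  feasible := hopt.feasible
  weight_nonneg _ := hopt.weight_nonneg
  weight_le_conflicts _ := hopt.weight_le_conflicts

end IsMaxWeightOpt

section Naive

variable {Prd : Ivl → Bool} {I : Ivl}

theorem naive_append_singleton (Prd : Ivl → Bool) (l : List Ivl) (I : Ivl) :
    naive Prd (l ++ [I]) = naiveStep Prd (naive Prd l) I :=
  List.foldl_append

theorem subset_naiveStep (Prd : Ivl → Bool) (S : Finset Ivl) (I : Ivl) :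
    S ⊆ naiveStep Prd S I := by
  unfold naiveStep
  split_ifs
  exacts [Finset.subset_insert I S, Finset.Subset.refl S]

theorem mem_naiveStep_self_or_exists_conflict (S : Finset Ivl) (hI : Prd I = true) :
    I ∈ naiveStep Prd S I ∨ ∃ J ∈ S, Conflict I J := by
  by_cases hfree : ∀ J ∈ S, ¬ Conflict I J
  · left
    rw [naiveStep, if_pos ⟨hI, hfree⟩]
    exact Finset.mem_insert_self I S
  · exact .inr (by simpa using hfree)

theorem mem_and_predicted_of_mem_naive {inst : List Ivl} (hI : I ∈ naive Prd inst) :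
    I ∈ inst ∧ Prd I = true := by
  induction inst using List.reverseRecOn with
  | nil => simp [naive] at hI
  | append_singleton l K ih =>
    have hstep : I ∈ naive Prd l ∨ I = K ∧ Prd K = true := by
      rw [naive_append_singleton, naiveStep] at hI
      split_ifs at hI with hK
      · exact (Finset.mem_insert.1 hI).symm.imp_right fun h => ⟨h, hK.1⟩
      · exact .inl hI
    rcases hstep with hIl | ⟨rfl, hIPrd⟩
    · exact (ih hIl).imp_left (List.mem_append_left [K])
    · exact ⟨List.mem_concat_self, hIPrd⟩

theorem mem_naive_or_exists_conflict {inst : List Ivl} (hI : I ∈ inst) (hIPrd : Prd I = true) :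
    I ∈ naive Prd inst ∨ ∃ J ∈ naive Prd inst, Conflict I J := by
  induction inst using List.reverseRecOn with
  | nil => simp at hI
  | append_singleton l K ih =>
    rw [naive_append_singleton]
    have hsub := subset_naiveStep Prd (naive Prd l) K
    have hstep : I ∈ naiveStep Prd (naive Prd l) K ∨ ∃ J ∈ naive Prd l, Conflict I J := by
      rcases List.mem_append.1 hI with hIl | hIK
      · exact (ih hIl).imp_left (@hsub I)
      · obtain rfl := List.mem_singleton.1 hIK
        exact mem_naiveStep_self_or_exists_conflict _ hIPrd
    exact hstep.imp_right fun ⟨J, hJ, hIJ⟩ => ⟨J, hsub hJ, hIJ⟩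

end Naive

section Err

variable {w : Ivl → ℝ} {opt : Finset Ivl} {Prd : Ivl → Bool} {I : Ivl}

theorem err_of_mem_of_eq_false (hI : I ∈ opt) (hIPrd : Prd I = false) :
    err w opt Prd I = w I := by
  simp [err, hI, hIPrd]

theorem err_of_notMem_of_eq_true (hI : I ∉ opt) (hIPrd : Prd I = true) :
    err w opt Prd I = ∑ J ∈ opt with Conflict J I, w J - w I := by
  simp [err, hI, hIPrd]

end Err

namespace IsExchangeOpt

variable {w : Ivl → ℝ} {inst : List Ivl} {opt : Finset Ivl}

theorem err_nonneg (hopt : IsExchangeOpt w inst opt) (Prd : Ivl → Bool) {I : Ivl}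
    (hI : I ∈ inst) : 0 ≤ err w opt Prd I := by
  unfold err
  split_ifs with _ hIopt
  · exact le_rfl
  · exact hopt.weight_nonneg I hIopt
  · exact sub_nonneg.2 (hopt.weight_le_conflicts I hI hIopt)

theorem exists_conflict_mem_naive_sdiff (hopt : IsExchangeOpt w inst opt) {Prd : Ivl → Bool}
    {J : Ivl} (hJ : J ∈ opt \ naive Prd inst) (hJPrd : Prd J = true) :
    ∃ I ∈ naive Prd inst \ opt, Conflict J I := by
  obtain ⟨hJopt, hJnaive⟩ := Finset.mem_sdiff.1 hJ
  obtain ⟨I, hI, hJI⟩ :=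
    (mem_naive_or_exists_conflict (hopt.mem_inst J hJopt) hJPrd).resolve_left hJnaive
  have hne : J ≠ I := fun h => hJnaive (h ▸ hI)
  exact ⟨I, Finset.mem_sdiff.2 ⟨hI, fun hIopt => hopt.feasible J hJopt I hIopt hne hJI⟩, hJI⟩

theorem sum_sdiff_naive_le (hopt : IsExchangeOpt w inst opt) (Prd : Ivl → Bool) :
    ∑ J ∈ opt \ naive Prd inst, w J ≤
      ∑ J ∈ opt with Prd J = false, w J +
        ∑ I ∈ naive Prd inst \ opt, ∑ J ∈ opt with Conflict J I, w J := by
  have hsub : opt \ naive Prd inst ⊆ opt := Finset.sdiff_subset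
  set blocked := (opt \ naive Prd inst).filter fun J => ¬ Prd J = false
  have hblocked : blocked ⊆ opt := (Finset.filter_subset _ _).trans hsub
  rw [← Finset.sum_filter_add_sum_filter_not (opt \ naive Prd inst) (Prd · = false)]
  refine add_le_add ?_ ?_
  · exact Finset.sum_le_sum_of_subset_of_nonneg (Finset.filter_subset_filter _ hsub)
      fun J hJ _ => hopt.weight_nonneg J (Finset.mem_filter.1 hJ).1
  · calc ∑ J ∈ blocked, w J
        ≤ ∑ I ∈ naive Prd inst \ opt, ∑ J ∈ blocked with Conflict J I, w J :=
          sum_le_sum_sum_filter_of_forall_exists (fun J hJ => hopt.weight_nonneg J (hblocked hJ))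
            fun J hJ => by
              obtain ⟨hJ, hJPrd⟩ := Finset.mem_filter.1 hJ
              exact hopt.exists_conflict_mem_naive_sdiff hJ (Bool.eq_true_of_not_eq_false hJPrd)
      _ ≤ ∑ I ∈ naive Prd inst \ opt, ∑ J ∈ opt with Conflict J I, w J :=
          Finset.sum_le_sum fun I _ =>
            Finset.sum_le_sum_of_subset_of_nonneg (Finset.filter_subset_filter _ hblocked)
              fun J hJ _ => hopt.weight_nonneg J (Finset.mem_filter.1 hJ).1

theorem le_totalErr (hopt : IsExchangeOpt w inst opt) (Prd : Ivl → Bool) :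
    ∑ J ∈ opt with Prd J = false, w J +
        ∑ I ∈ naive Prd inst \ opt, (∑ J ∈ opt with Conflict J I, w J - w I) ≤
      totalErr w opt Prd inst := by
  set missed := opt.filter (Prd · = false)
  set wrong := naive Prd inst \ opt
  have hmissed : ∀ I ∈ missed, I ∈ opt ∧ Prd I = false := fun _ => Finset.mem_filter.1
  have hwrong : ∀ I ∈ wrong, I ∈ naive Prd inst ∧ I ∉ opt := fun _ => Finset.mem_sdiff.1
  have hdisj : Disjoint missed wrong :=
    Finset.disjoint_left.2 fun I hI hI' => (hwrong I hI').2 (hmissed I hI).1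
  have hinst : ∀ I ∈ missed ∪ wrong, I ∈ inst := fun I hI =>
    (Finset.mem_union.1 hI).elim (fun h => hopt.mem_inst I (hmissed I h).1)
      fun h => (mem_and_predicted_of_mem_naive (hwrong I h).1).1
  calc ∑ J ∈ missed, w J + ∑ I ∈ wrong, (∑ J ∈ opt with Conflict J I, w J - w I)
      = ∑ I ∈ missed, err w opt Prd I + ∑ I ∈ wrong, err w opt Prd I := by
        congr 1
        · exact Finset.sum_congr rfl fun I hI =>
            (err_of_mem_of_eq_false (hmissed I hI).1 (hmissed I hI).2).symm
        · exact Finset.sum_congr rfl fun I hI =>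
            (err_of_notMem_of_eq_true (hwrong I hI).2
              (mem_and_predicted_of_mem_naive (hwrong I hI).1).2).symm
    _ = ∑ I ∈ missed ∪ wrong, err w opt Prd I := (Finset.sum_union hdisj).symm
    _ ≤ totalErr w opt Prd inst :=
        sum_le_list_sum_map_of_nonneg hinst fun _ => hopt.err_nonneg Prd

end IsExchangeOpt

theorem naive_unit_performance_general {w : Ivl → ℝ} {inst : List Ivl} {opt : Finset Ivl}
    (hopt : IsExchangeOpt w inst opt) (Prd : Ivl → Bool) :
    ∑ I ∈ naive Prd inst, w I ≥ ∑ I ∈ opt, w I - totalErr w opt Prd inst := by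
  have hcharge := hopt.sum_sdiff_naive_le Prd
  have herr := hopt.le_totalErr Prd
  rw [Finset.sum_sub_distrib] at herr
  have hexchange : ∑ I ∈ opt \ naive Prd inst, w I - ∑ I ∈ naive Prd inst \ opt, w I =
      ∑ I ∈ opt, w I - ∑ I ∈ naive Prd inst, w I := Finset.sum_sdiff_sub_sum_sdiff
  linarith

theorem naive_unit_performance
    (inst : List Ivl) (hdist : inst.Nodup) (Prd : Ivl → Bool)
    (opt : Finset Ivl) (hopt : IsMaxCardOpt inst opt) :
    ((naive Prd inst).card : ℝ) ≥
      (opt.card : ℝ) - totalErr (fun _ => 1) opt Prd inst := by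
  simpa using naive_unit_performance_general hopt.isMaxWeightOpt.isExchangeOpt Prd
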